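/- Let G be a finite simple graph with at least one edge whose chromatic number χ(G) equals c (c ≥ 2, finite). Then φ₂(G) ≤ φ₂(c): given a proper c-colouring of G and a minimal Pauli set for the complete graph on c vertices, assigning to each vertex of G the single-qubit settings of its colour yields a Pauli set for G of cardinality φ₂(c). Combined with the clique lower bound this gives the sandwich inequality φ₂(ω(G)) ≤ φ₂(G) ≤ φ₂(χ(G)). -/

import Mathlib

/-! A proper `c`-colouring of `G` is a graph homomorphism from `G` to the complete graph on
`Fin c`, and composing with a homomorphism turns a Pauli set of the target into one of the source
(`IsPauliSet.image_comp`). Pulling back a minimum Pauli set of the complete graph, which exists by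
`exists_isPauliSet_card_eq_phi2G`, gives a Pauli set for `G` of cardinality at most `phi2 c`;
distinct settings may coincide after composition, which only helps. -/

/-- A Pauli set for a simple graph `G`: a finite set `S` of assignments of a Pauli
operator (an element of `Fin 3`) to each vertex, such that for every edge `{i, j}`
of `G` and every pair of values `(a, b)` some `f ∈ S` has `f i = a` and `f j = b`. -/
def IsPauliSet {V : Type*} (G : SimpleGraph V) (S : Finset (V → Fin 3)) : Prop :=
  ∀ i j : V, G.Adj i j → ∀ a b : Fin 3, ∃ f ∈ S, f i = a ∧ f j = b

/-- `phi2G G` is the minimum cardinality of a Pauli set for `G`. -/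
noncomputable def phi2G {V : Type*} (G : SimpleGraph V) : ℕ :=
  sInf {N : ℕ | ∃ S : Finset (V → Fin 3), S.card = N ∧ IsPauliSet G S}

/-- `phi2 n` is `phi2G` of the complete graph on `n` vertices: the minimal number of
Pauli settings for two-body overlapping tomography of `n` qubits. -/
noncomputable def phi2 (n : ℕ) : ℕ := phi2G (⊤ : SimpleGraph (Fin n))

theorem phi2G_le_card {V : Type*} {G : SimpleGraph V} {S : Finset (V → Fin 3)}
    (hS : IsPauliSet G S) : phi2G G ≤ S.card :=
  Nat.sInf_le ⟨S, rfl, hS⟩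

theorem isPauliSet_univ {V : Type*} [Fintype V] [DecidableEq V] (G : SimpleGraph V) :
    IsPauliSet G (Finset.univ : Finset (V → Fin 3)) := fun i j hij a b =>
  ⟨fun v => if v = i then a else b, Finset.mem_univ _, by simp, by simp [hij.ne']⟩

/-- The infimum defining `phi2G` is attained: on a finite vertex set the defining set is
nonempty, so `sInf` is not the junk value `0` of an empty set. -/
theorem exists_isPauliSet_card_eq_phi2G {V : Type*} [Fintype V] [DecidableEq V]
    (G : SimpleGraph V) : ∃ S : Finset (V → Fin 3), S.card = phi2G G ∧ IsPauliSet G S :=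
  Nat.sInf_mem (s := {N : ℕ | ∃ S : Finset (V → Fin 3), S.card = N ∧ IsPauliSet G S})
    ⟨_, Finset.univ, rfl, isPauliSet_univ G⟩

/-- Pauli sets pull back along graph homomorphisms, since edges map to edges. -/
theorem IsPauliSet.image_comp {V W : Type*} [DecidableEq (V → Fin 3)] {G : SimpleGraph V}
    {H : SimpleGraph W} (φ : G →g H) {S : Finset (W → Fin 3)} (hS : IsPauliSet H S) :
    IsPauliSet G (S.image fun f => f ∘ φ) := fun i j hij a b =>
  let ⟨f, hf, hi, hj⟩ := hS (φ i) (φ j) (φ.map_adj hij) a b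
  ⟨f ∘ φ, Finset.mem_image_of_mem _ hf, hi, hj⟩

/-- Colouring upper bound: if a finite simple graph `G` with at least one edge has
chromatic number `c ≥ 2`, then `φ₂(G) ≤ φ₂(c)`. -/
theorem phi2_le_phi2_chromaticNumber {V : Type*} [Fintype V] (G : SimpleGraph V)
    (c : ℕ) (hc : 2 ≤ c) (hedge : ∃ i j : V, G.Adj i j)
    (hχ : G.chromaticNumber = (c : ℕ∞)) :
    phi2G G ≤ phi2 c := by
  classical
  obtain ⟨C⟩ : G.Colorable c := SimpleGraph.chromaticNumber_le_iff_colorable.mp hχ.le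
  obtain ⟨S, hcard, hS⟩ := exists_isPauliSet_card_eq_phi2G (⊤ : SimpleGraph (Fin c))
  calc phi2G G ≤ (S.image fun f => f ∘ C).card := phi2G_le_card (hS.image_comp C)
    _ ≤ S.card := Finset.card_image_le
    _ = phi2 c := hcard
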